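/- Let α ∈ (0,1) and δ ∈ (0, π/16). Let ψ_0 : ℝ → ℝ be the Lipschitz, 2π-periodic function that is odd, π-periodic, even with respect to π/4, and on [0, π/4] is given by ψ_0(t) = δ^{α−1} t for 0 ≤ t ≤ 2δ and ψ_0(t) = 2δ^α for 2δ < t ≤ π/4; for s̄ ∈ ℝ set ψ_{s̄} = ψ_0(· − s̄). Then for every interval I ⊂ ℝ and every right-continuous v ∈ BV(I;ℝ): |Dv|(E) ≤ δ^{1−α} |D(ψ_{s̄}∘v)|(E), where E = {t ∈ I : v(t−) ∈ [s̄−δ, s̄+δ] and v(t+) ∈ [s̄−δ, s̄+δ]}. -/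

import Mathlib

open MeasureTheory Metric Filter Set Bornology
open scoped ENNReal NNReal Topology Real

noncomputable section

namespace Eikonal

/-! ### Basic geometric objects on `ℝ² ≃ ℂ` -/

/-- The point `e^{iθ}` of the unit circle, viewed as a complex number. -/
def circ (θ : ℝ) : ℂ := Complex.exp (θ * Complex.I)

/-- The real scalar product of `ℝ² ≃ ℂ`. -/
def dotR (z w : ℂ) : ℝ := z.re * w.re + z.im * w.im

/-- Smooth compactly supported test functions in the open set `Ω`. -/
def TestFun (Ω : Set ℂ) (ζ : ℂ → ℝ) : Prop :=
  ContDiff ℝ (⊤ : ℕ∞) ζ ∧ HasCompactSupport ζ ∧ tsupport ζ ⊆ Ω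

/-- `C¹` compactly supported test functions in `Ω`. -/
def TestFun1 (Ω : Set ℂ) (ζ : ℂ → ℝ) : Prop :=
  ContDiff ℝ 1 ζ ∧ HasCompactSupport ζ ∧ tsupport ζ ⊆ Ω

/-- `div m = 0` in the sense of distributions on `Ω`:
`∫_Ω m·∇ζ = 0` for all test functions `ζ`, where `m·∇ζ (x) = Dζ(x)[m x]`. -/
def DivFree (Ω : Set ℂ) (m : ℂ → ℂ) : Prop :=
  ∀ ζ : ℂ → ℝ, TestFun Ω ζ → (∫ x in Ω, fderiv ℝ ζ x (m x)) = 0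

/-- Weak solution of the eikonal equation on `Ω` : `|m| = 1` a.e. and `div m = 0` in `𝒟'(Ω)`. -/
def EikonalSol (Ω : Set ℂ) (m : ℂ → ℂ) : Prop :=
  AEStronglyMeasurable m (volume.restrict Ω) ∧
    (∀ᵐ x ∂(volume.restrict Ω), ‖m x‖ = 1) ∧ DivFree Ω m

/-! ### Besov seminorms (finite–difference characterization), with values in `ℝ≥0∞` -/

/-- The Besov seminorm `|m|_{B^s_{p,∞}(Ω)} = sup_{h ≠ 0} |h|^{-s} ‖m(·+h) - m‖_{L^p(Ω ∩ (Ω-h))}`. -/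
def besovE (Ω : Set ℂ) (p s : ℝ) (m : ℂ → ℂ) : ℝ≥0∞ :=
  ⨆ h : {h : ℂ // h ≠ 0},
    (‖h.1‖₊ : ℝ≥0∞) ^ (-s) *
      (∫⁻ x in Ω ∩ {x | x + h.1 ∈ Ω}, (‖m (x + h.1) - m x‖₊ : ℝ≥0∞) ^ p) ^ (1/p)

/-- The `L^p(Ω)` norm, with values in `ℝ≥0∞`. -/
def LpE (Ω : Set ℂ) (p : ℝ) (m : ℂ → ℂ) : ℝ≥0∞ :=
  (∫⁻ x in Ω, (‖m x‖₊ : ℝ≥0∞) ^ p) ^ (1/p)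

/-- The Besov norm `‖m‖_{B^s_{p,∞}(Ω)} = ‖m‖_{L^p(Ω)} + |m|_{B^s_{p,∞}(Ω)}`. -/
def besovNormE (Ω : Set ℂ) (p s : ℝ) (m : ℂ → ℂ) : ℝ≥0∞ := LpE Ω p m + besovE Ω p s m

/-! ### Entropies -/

/-- `Φ ∈ ENT`, recorded through the angular parametrization `θ ↦ Φ(e^{iθ})` together with its
derivative `φ'` : the derivative exists everywhere, is Lipschitz (i.e. `Φ ∈ C^{1,1}(S¹)`), and
satisfies the entropy condition `(d/dθ) Φ(e^{iθ}) · e^{iθ} = 0`. -/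
def IsEnt (Φ : ℂ → ℂ) (φ' : ℝ → ℂ) : Prop :=
  (∀ θ : ℝ, HasDerivAt (fun t => Φ (circ t)) (φ' θ) θ) ∧
    (∃ L : ℝ≥0, LipschitzWith L φ') ∧
    ∀ θ : ℝ, dotR (φ' θ) (circ θ) = 0

/-- `Φ ∈ ENT` with `‖Φ‖_{C^{1,1}} ≤ 1`. -/
def EntC11Ball (Φ : ℂ → ℂ) : Prop :=
  ∃ φ' : ℝ → ℂ, IsEnt Φ φ' ∧ (∀ θ, ‖Φ (circ θ)‖ ≤ 1) ∧ (∀ θ, ‖φ' θ‖ ≤ 1) ∧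
    LipschitzWith 1 φ'

/-- `Φ ∈ ENT` with `‖Φ‖_{C^{1,α}} ≤ 1`. -/
def EntC1aBall (α : ℝ) (Φ : ℂ → ℂ) : Prop :=
  ∃ φ' : ℝ → ℂ, IsEnt Φ φ' ∧ (∀ θ, ‖Φ (circ θ)‖ ≤ 1) ∧ (∀ θ, ‖φ' θ‖ ≤ 1) ∧
    ∀ θ₁ θ₂ : ℝ, ‖φ' θ₁ - φ' θ₂‖ ≤ |θ₁ - θ₂| ^ α

/-- `Φ ∈ ẼNT`: an entropy whose angular derivative is `π`-antiperiodic
(odd entropies plus constants). -/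
def EntTilde (Φ : ℂ → ℂ) : Prop :=
  ∃ φ' : ℝ → ℂ, IsEnt Φ φ' ∧ ∀ θ : ℝ, φ' (θ + π) = - φ' θ

/-- `Φ ∈ ẼNT` with `‖Φ‖_{C^{1,α}} ≤ 1`. -/
def EntTildeC1aBall (α : ℝ) (Φ : ℂ → ℂ) : Prop :=
  ∃ φ' : ℝ → ℂ, IsEnt Φ φ' ∧ (∀ θ, ‖Φ (circ θ)‖ ≤ 1) ∧ (∀ θ, ‖φ' θ‖ ≤ 1) ∧
    (∀ θ₁ θ₂ : ℝ, ‖φ' θ₁ - φ' θ₂‖ ≤ |θ₁ - θ₂| ^ α) ∧ ∀ θ : ℝ, φ' (θ + π) = - φ' θ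

/-! ### Entropy productions as measures -/

/-- Integral of a function against a signed measure. -/
def sInt {X : Type*} [MeasurableSpace X] (σ : MeasureTheory.SignedMeasure X) (f : X → ℝ) : ℝ :=
  (∫ x, f x ∂σ.toJordanDecomposition.posPart) - ∫ x, f x ∂σ.toJordanDecomposition.negPart

/-- The (finite Radon) signed measure `μ` represents the distribution
`div Φ(m) : ζ ↦ -∫_Ω Φ(m)·∇ζ`. -/
def RepresentsDiv (Ω : Set ℂ) (m Φ : ℂ → ℂ) (μ : MeasureTheory.SignedMeasure ℂ) : Prop :=
  ∀ ζ : ℂ → ℝ, TestFun Ω ζ → -(∫ x in Ω, fderiv ℝ ζ x (Φ (m x))) = sInt μ ζ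

/-- The supremum measure `ν = ⋁ {|div Φ(m)| : Φ ∈ ENT, ‖Φ‖_{C^{1,1}} ≤ 1}`. -/
def entVarC11 (Ω : Set ℂ) (m : ℂ → ℂ) : Measure ℂ :=
  ⨆ Φ : {Φ : ℂ → ℂ // EntC11Ball Φ},
    ⨆ μ : {μ : MeasureTheory.SignedMeasure ℂ // RepresentsDiv Ω m Φ.1 μ}, μ.1.totalVariation

/-- The supremum measure `⋁ {|div Φ(m)| : Φ ∈ ENT, ‖Φ‖_{C^{1,α}} ≤ 1}`. -/
def entVarC1a (α : ℝ) (Ω : Set ℂ) (m : ℂ → ℂ) : Measure ℂ :=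
  ⨆ Φ : {Φ : ℂ → ℂ // EntC1aBall α Φ},
    ⨆ μ : {μ : MeasureTheory.SignedMeasure ℂ // RepresentsDiv Ω m Φ.1 μ}, μ.1.totalVariation

/-- The supremum measure `⋁ {|div Φ(m)| : Φ ∈ ẼNT, ‖Φ‖_{C^{1,α}} ≤ 1}`. -/
def entVarTildeC1a (α : ℝ) (Ω : Set ℂ) (m : ℂ → ℂ) : Measure ℂ :=
  ⨆ Φ : {Φ : ℂ → ℂ // EntTildeC1aBall α Φ},
    ⨆ μ : {μ : MeasureTheory.SignedMeasure ℂ // RepresentsDiv Ω m Φ.1 μ}, μ.1.totalVariation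

/-- The jump set `J_m = {x ∈ Ω : limsup_{r→0} ν(B_r(x))/r > 0}`. -/
def jumpSet (Ω : Set ℂ) (m : ℂ → ℂ) : Set ℂ :=
  {x ∈ Ω | 0 < Filter.limsup
    (fun r : ℝ => entVarC11 Ω m (Metric.ball x r) / ENNReal.ofReal r) (𝓝[>] (0:ℝ))}

/-- A set `J ⊆ ℂ` is (countably) `1`-rectifiable: up to an `H¹`-null set it is covered by
countably many Lipschitz images of `ℝ`. -/
def Rect1 (J : Set ℂ) : Prop :=
  ∃ (f : ℕ → ℝ → ℂ) (K : ℕ → ℝ≥0), (∀ n, LipschitzWith (K n) (f n)) ∧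
    μH[1] (J \ ⋃ n, Set.range (f n)) = 0

/-- `n, m⁺, m⁻` are a measure-theoretic unit normal and one-sided `L¹` traces of `m`
at `H¹`-a.e. point of the jump set `J_m`. -/
def TraceData (Ω : Set ℂ) (m n mp mm : ℂ → ℂ) : Prop :=
  ∀ᵐ x ∂((μH[1] : Measure ℂ).restrict (jumpSet Ω m)),
    ‖n x‖ = 1 ∧ ‖mp x‖ = 1 ∧ ‖mm x‖ = 1 ∧
    Filter.Tendsto
      (fun r : ℝ => (∫ y in Metric.ball x r ∩ {y | 0 < dotR (y - x) (n x)}, ‖m y - mp x‖) / r^2)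
      (𝓝[>] (0:ℝ)) (𝓝 0) ∧
    Filter.Tendsto
      (fun r : ℝ => (∫ y in Metric.ball x r ∩ {y | dotR (y - x) (n x) < 0}, ‖m y - mm x‖) / r^2)
      (𝓝[>] (0:ℝ)) (𝓝 0)

/-- The subset `J_m^δ ⊆ J_m` of jumps of (angular) amplitude larger than `δ`, defined through
trace functions `m⁺ = mp`, `m⁻ = mm`. -/
def Jdelta (Ω : Set ℂ) (m mp mm : ℂ → ℂ) (δ : ℝ) : Set ℂ :=
  {x ∈ jumpSet Ω m | δ < Real.arccos (dotR (mp x) (mm x))}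

/-! ### Mollifiers -/

/-- A mollifier: `ρ ∈ C_c¹(B₁)`, `ρ ≥ 0`, `∫ ρ = 1`, `|∇ρ| ≤ 2`. -/
def Mollifier (ρ : ℂ → ℝ) : Prop :=
  ContDiff ℝ 1 ρ ∧ HasCompactSupport ρ ∧ tsupport ρ ⊆ Metric.ball 0 1 ∧
    (∀ x, 0 ≤ ρ x) ∧ (∫ x, ρ x) = 1 ∧ ∀ x, ‖fderiv ℝ ρ x‖ ≤ 2

/-- The mollification `m_ε = m * ρ_ε`, where `ρ_ε(y) = ε⁻² ρ(y/ε)`. -/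
def mollify (ρ : ℂ → ℝ) (ε : ℝ) (m : ℂ → ℂ) (x : ℂ) : ℂ :=
  ∫ y, ((ε^2)⁻¹ * ρ (ε⁻¹ • y)) • m (x - y)

/-! ### The kinetic formulation -/

/-- `χ(x,s) = 1` if `e^{is}·m(x) > 0` and `0` otherwise. -/
def chi (m : ℂ → ℂ) (x : ℂ) (s : ℝ) : ℝ := if 0 < dotR (circ s) (m x) then 1 else 0

/-- Test functions for the kinetic equation on `Ω × 𝕋` (`𝕋 = ℝ/2πℤ`): smooth, `2π`-periodic in
the kinetic variable, compactly supported inside `Ω` in the space variable. -/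
def KineticTest (Ω : Set ℂ) (φ : ℂ → ℝ → ℝ) : Prop :=
  ContDiff ℝ (⊤ : ℕ∞) (fun p : ℂ × ℝ => φ p.1 p.2) ∧ (∀ x s, φ x (s + 2*π) = φ x s) ∧
    ∃ K : Set ℂ, IsCompact K ∧ K ⊆ Ω ∧ ∀ x ∉ K, ∀ s, φ x s = 0

/-- `σ` is a kinetic measure for `m` : it is a finite signed (Radon) measure on `Ω × 𝕋`
(realized as `Ω × [0,2π)`) such that `e^{is}·∇ₓχ = ∂ₛσ` in `𝒟'(Ω × 𝕋)`. -/
def IsKineticMeasure (Ω : Set ℂ) (m : ℂ → ℂ) (σ : MeasureTheory.SignedMeasure (ℂ × ℝ)) : Prop :=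
  σ.totalVariation (Ω ×ˢ Set.Ico 0 (2*π))ᶜ = 0 ∧
    ∀ φ : ℂ → ℝ → ℝ, KineticTest Ω φ →
      (∫ x in Ω, ∫ s in Set.Ico 0 (2*π), chi m x s * fderiv ℝ (fun y => φ y s) x (circ s))
        = - sInt σ (fun p => deriv (fun s => φ p.1 s) p.2)

/-- `σ` is the kinetic measure of minimal total variation. -/
def IsMinKinetic (Ω : Set ℂ) (m : ℂ → ℂ) (σ : MeasureTheory.SignedMeasure (ℂ × ℝ)) : Prop :=
  IsKineticMeasure Ω m σ ∧
    ∀ σ' : MeasureTheory.SignedMeasure (ℂ × ℝ), IsKineticMeasure Ω m σ' →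
      σ.totalVariation Set.univ ≤ σ'.totalVariation Set.univ

/-- `ν_min = (p_x)_♯ |σ_min|`. -/
def nuMin (σ : MeasureTheory.SignedMeasure (ℂ × ℝ)) : Measure ℂ :=
  σ.totalVariation.map Prod.fst

/-- The entropy `Φ_ψ(z) = ∫_𝕋 1_{e^{is}·z>0} ψ(s) e^{is} ds` associated with `ψ : 𝕋 → ℝ`. -/
def PhiPsi (ψ : ℝ → ℝ) (z : ℂ) : ℂ :=
  ∫ s in Set.Ico 0 (2*π), {s' : ℝ | 0 < dotR (circ s') z}.indicator (fun s' => ψ s' • circ s') s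

/-! ### Lagrangian representations -/

/-- A (candidate) Lagrangian trajectory: a time interval `(tm, tp)`, a spatial component `x`,
a lifted angular component `s`, and the derivative measure `Ds` of `s`. -/
structure Curve where
  tm : ℝ
  tp : ℝ
  x : ℝ → ℂ
  s : ℝ → ℝ
  Ds : MeasureTheory.SignedMeasure ℝ

instance : MeasurableSpace Curve := ⊤

/-- The open time interval of a curve. -/
def Curve.I (γ : Curve) : Set ℝ := Set.Ioo γ.tm γ.tp

/-- A curve is admissible: `0 ≤ tm ≤ tp ≤ T`, `γ_x` Lipschitz with values in `Ω̄`, `γ_s`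
right-continuous of bounded variation with derivative measure `Ds` carried by the time interval. -/
def Curve.Valid (T : ℝ) (Ω : Set ℂ) (γ : Curve) : Prop :=
  0 ≤ γ.tm ∧ γ.tm ≤ γ.tp ∧ γ.tp ≤ T ∧
    (∃ L : ℝ≥0, LipschitzOnWith L γ.x (Set.Icc γ.tm γ.tp)) ∧
    (∀ t ∈ Set.Icc γ.tm γ.tp, γ.x t ∈ closure Ω) ∧
    (∀ t ∈ γ.I, Filter.Tendsto γ.s (𝓝[>] t) (𝓝 (γ.s t))) ∧
    (∀ a ∈ γ.I, ∀ b ∈ γ.I, a ≤ b → γ.s b - γ.s a = γ.Ds (Set.Ioc a b)) ∧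
    γ.Ds.totalVariation γ.Iᶜ = 0

/-- Reduction mod `2π` to `[0, 2π)`. -/
def wrap (s : ℝ) : ℝ := s - 2*π*(⌊s/(2*π)⌋ : ℝ)

/-- The set of atoms of a signed measure on `ℝ`. -/
def atomSet (μ : MeasureTheory.SignedMeasure ℝ) : Set ℝ := {t | μ.totalVariation {t} ≠ 0}

/-- `|D^j v|`: the jump (atomic) part of the total variation of a derivative measure. -/
def jumpTV (μ : MeasureTheory.SignedMeasure ℝ) : Measure ℝ :=
  μ.totalVariation.restrict (atomSet μ)

/-- `|D̃ v|`: the diffuse (continuous) part of the total variation of a derivative measure. -/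
def diffTV (μ : MeasureTheory.SignedMeasure ℝ) : Measure ℝ :=
  μ.totalVariation.restrict (atomSet μ)ᶜ

/-- `ω` is a Lagrangian representation of `m` on `[0,T]`. -/
def IsLagRep (T : ℝ) (Ω : Set ℂ) (m : ℂ → ℂ) (ω : Measure Curve) : Prop :=
  (∀ᵐ γ ∂ω, γ.Valid T Ω) ∧
  (∀ t ∈ Set.Ioo (0:ℝ) T,
    Measure.map (fun γ : Curve => (γ.x t, wrap (γ.s t))) (ω.restrict {γ : Curve | t ∈ γ.I})
      = ((volume.restrict Ω).prod (volume.restrict (Set.Ico 0 (2*π)))).restrict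
          {p : ℂ × ℝ | 0 < dotR (circ p.2) (m p.1)}) ∧
  (∀ᵐ γ ∂ω, ∀ᵐ t ∂(volume.restrict γ.I), HasDerivAt γ.x (circ (γ.s t)) t) ∧
  (∫⁻ γ, γ.Ds.totalVariation Set.univ ∂ω) < ⊤ ∧
  (∀ᵐ γ ∂ω, (0 < γ.tm → γ.x γ.tm ∈ frontier Ω) ∧ (γ.tp < T → γ.x γ.tp ∈ frontier Ω))

/-- `ω` is a minimal Lagrangian representation of `m`, relative to the minimal kinetic
measure `σmin`. -/
def IsMinLagRep (T : ℝ) (Ω : Set ℂ) (m : ℂ → ℂ) (σmin : MeasureTheory.SignedMeasure (ℂ × ℝ))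
    (ω : Measure Curve) : Prop :=
  IsLagRep T Ω m ω ∧
    (∫⁻ γ, γ.Ds.totalVariation Set.univ ∂ω) = ENNReal.ofReal T * σmin.totalVariation Set.univ

/-- A bounded open set of class `C^{1,1}`: near each boundary point, `Ω` is the subgraph of a
`C^{1,1}` function in a suitable orthonormal frame. -/
def C11Domain (Ω : Set ℂ) : Prop :=
  ∀ z ∈ frontier Ω, ∃ (e : ℂ) (r : ℝ) (f f' : ℝ → ℝ) (L : ℝ≥0),
    0 < r ∧ ‖e‖ = 1 ∧ (∀ t, HasDerivAt f (f' t) t) ∧ LipschitzWith L f' ∧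
    ∀ y ∈ Metric.ball z r, (y ∈ Ω ↔ dotR (y - z) e < f (dotR (y - z) (Complex.I * e)))

/-- `x` is a Lebesgue point of `f` with value `c`, with respect to the measure `ρ`. -/
def LebesguePtVal (ρ : Measure ℂ) (f : ℂ → ℝ) (x : ℂ) (c : ℝ) : Prop :=
  f x = c ∧
    Filter.Tendsto
      (fun r : ℝ => (∫⁻ y in Metric.ball x r, ENNReal.ofReal |f y - c| ∂ρ) / ρ (Metric.ball x r))
      (𝓝[>] (0:ℝ)) (𝓝 0)

/-! ## STATEMENT 15 -/

/-!
At a point of `E` both one-sided limits of `v` are interior to the region where `ψ = ψ_{s̄}` is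
affine with slope `c = δ^{α-1}`, so `v` takes its values in that region on a whole neighbourhood of
the point, and there the increments of `ψ ∘ v` are `c` times those of `v`. Hence `D(ψ ∘ v)` and
`c Dv` agree on a half-open interval around each point of `E`. Countably many of these intervals
cover `E`, which gives the identity `|D(ψ ∘ v)|(E) = |c| |Dv|(E)`.
-/

section Measure

variable {X : Type*} [TopologicalSpace X] [MeasurableSpace X]

theorem measure_eq_of_forall_exists_nhdsWithin_restrict_eq [SecondCountableTopology X]
    {m₁ m₂ : Measure X} {s : Set X}
    (h : ∀ x ∈ s, ∃ u ∈ 𝓝[s] x, m₁.restrict u = m₂.restrict u) : m₁ s = m₂ s := by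
  choose! u hu hm using h
  obtain ⟨T, hTs, hTc, hsT⟩ := TopologicalSpace.countable_cover_nhdsWithin hu
  have hT : m₁.restrict (⋃ x ∈ T, u x) = m₂.restrict (⋃ x ∈ T, u x) :=
    (Measure.restrict_biUnion_congr hTc).2 fun x hx => hm x (hTs hx)
  rw [← Measure.restrict_eq_self m₁ hsT, hT, Measure.restrict_eq_self m₂ hsT]

variable [LinearOrder X] [OrderTopology X]

theorem tendsto_measure_Ioc_nhdsGT [FirstCountableTopology X] [DenselyOrdered X]
    [OpensMeasurableSpace X] [NoMaxOrder X] (m : Measure X) [IsFiniteMeasure m] (t : X) :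
    Tendsto (fun s => m (Ioc t s)) (𝓝[>] t) (𝓝 0) := by
  have hempty : ⋂ s > t, Ioc t s = ∅ := by
    refine eq_empty_of_forall_notMem fun x hx => ?_
    rw [mem_iInter₂] at hx
    obtain ⟨s, hts⟩ := exists_gt t
    obtain ⟨r, htr, hrx⟩ := exists_between (hx s hts).1
    exact hrx.not_ge (hx r htr).2
  rw [← measure_empty (μ := m), ← hempty]
  exact tendsto_measure_biInter_gt (fun _ _ => measurableSet_Ioc.nullMeasurableSet)
    (fun _ _ _ hij => Ioc_subset_Ioc_right hij) ((exists_gt t).imp fun _ hs => ⟨hs, by finiteness⟩)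

theorem tendsto_measure_Ioo_nhdsLT [FirstCountableTopology X] [OpensMeasurableSpace X]
    [NoMinOrder X] (m : Measure X) [IsFiniteMeasure m] (t : X) :
    Tendsto (fun s => m (Ioo s t)) (𝓝[<] t) (𝓝 0) := by
  have hempty : ⋂ s < t, Ioo s t = ∅ := by
    refine eq_empty_of_forall_notMem fun x hx => ?_
    rw [mem_iInter₂] at hx
    obtain ⟨s, hst⟩ := exists_lt t
    exact lt_irrefl x (hx x (hx s hst).2).1
  rw [← measure_empty (μ := m), ← hempty]
  exact tendsto_measure_biInter_gt (ι := Xᵒᵈ) (fun _ _ => measurableSet_Ioo.nullMeasurableSet)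
    (fun _ _ _ hij => Ioo_subset_Ioo_left hij) ((exists_lt t).imp fun _ hs => ⟨hs, by finiteness⟩)

theorem restrict_Ioc_eq_of_forall_Ioc_eq [SecondCountableTopology X] [BorelSpace X]
    {M : Type*} [AddCommGroup M] [TopologicalSpace M] [T2Space M] {μ ν : VectorMeasure X M}
    {a b : X} (h : ∀ x ∈ Icc a b, ∀ y ∈ Icc a b, x ≤ y → μ (Ioc x y) = ν (Ioc x y)) :
    μ.restrict (Ioc a b) = ν.restrict (Ioc a b) := by
  have hinter : ∀ x y, μ (Ioc x y ∩ Ioc a b) = ν (Ioc x y ∩ Ioc a b) := by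
    intro x y
    rw [Ioc_inter_Ioc]
    rcases le_total (x ⊔ a) (y ⊓ b) with hle | hle
    · exact h _ ⟨le_sup_right, hle.trans inf_le_right⟩ _ ⟨le_sup_right.trans hle, inf_le_right⟩ hle
    · simp [Ioc_eq_empty_of_le hle]
  refine VectorMeasure.ext_of_generateFrom _ ?_
    (BorelSpace.measurable_eq.trans (borel_eq_generateFrom_Ioc X))
    (isPiSystem_Ioc (id : X → X) id) ?_
  · rintro _ ⟨x, y, -, rfl⟩
    simpa only [VectorMeasure.restrict_apply _ measurableSet_Ioc measurableSet_Ioc]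
      using hinter x y
  · simpa only [VectorMeasure.restrict_apply_univ, inter_self] using hinter a b

end Measure

section Derivative

variable {F : Type*} [NormedAddCommGroup F] {I : Set ℝ} {v : ℝ → F} {μ : VectorMeasure ℝ F} {t : ℝ}

/-- The vector measure `μ` is the distributional derivative on `I` of the right-continuous function
`v`, expressed through the increments of `v` on half-open intervals. The mass of
`μ` outside the convex hull of `I` is not constrained. -/
def IsDerivMeasureOn (v : ℝ → F) (μ : VectorMeasure ℝ F) (I : Set ℝ) : Prop :=
  ∀ a ∈ I, ∀ b ∈ I, a ≤ b → v b - v a = μ (Ioc a b)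

namespace IsDerivMeasureOn

theorem tendsto_nhdsGT [IsFiniteMeasure μ.variation] (hμ : IsDerivMeasureOn v μ I)
    (hI : I ∈ 𝓝 t) : Tendsto v (𝓝[>] t) (𝓝 (v t)) := by
  rw [tendsto_iff_edist_tendsto_0]
  refine tendsto_of_tendsto_of_tendsto_of_le_of_le' tendsto_const_nhds
    (tendsto_measure_Ioc_nhdsGT μ.variation t) (.of_forall fun _ => zero_le) ?_
  filter_upwards [self_mem_nhdsWithin, nhdsWithin_le_nhds hI] with s hts hs
  rw [edist_eq_enorm_sub, hμ t (mem_of_mem_nhds hI) s hs (le_of_lt hts)]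
  exact μ.enorm_measure_le_variation _

theorem tendsto_nhdsLT [IsFiniteMeasure μ.variation] (hμ : IsDerivMeasureOn v μ I)
    (hI : I ∈ 𝓝 t) : Tendsto v (𝓝[<] t) (𝓝 (v t - μ {t})) := by
  rw [tendsto_iff_edist_tendsto_0]
  refine tendsto_of_tendsto_of_tendsto_of_le_of_le' tendsto_const_nhds
    (tendsto_measure_Ioo_nhdsLT μ.variation t) (.of_forall fun _ => zero_le) ?_
  filter_upwards [self_mem_nhdsWithin, nhdsWithin_le_nhds hI] with s hst hs
  have hsplit : v t - v s = μ (Ioo s t) + μ {t} := by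
    rw [hμ s hs t (mem_of_mem_nhds hI) (le_of_lt hst), ← Ioo_union_right hst,
      VectorMeasure.of_union (by simp) measurableSet_Ioo (measurableSet_singleton t)]
  have hsub : v t - μ {t} - v s = μ (Ioo s t) := by
    rw [sub_right_comm, hsplit, add_sub_cancel_right]
  rw [edist_comm, edist_eq_enorm_sub, hsub]
  exact μ.enorm_measure_le_variation _

theorem eventually_mem [IsFiniteMeasure μ.variation] (hμ : IsDerivMeasureOn v μ I)
    (hI : I ∈ 𝓝 t) {U : Set F} (hleft : U ∈ 𝓝 (v.leftLim t)) (hright : U ∈ 𝓝 (v.rightLim t)) :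
    ∀ᶠ s in 𝓝 t, v s ∈ U := by
  rw [leftLim_eq_of_tendsto (hμ.tendsto_nhdsLT hI)] at hleft
  rw [rightLim_eq_of_tendsto (hμ.tendsto_nhdsGT hI)] at hright
  rw [← nhdsNE_sup_pure, ← nhdsLT_sup_nhdsGT, eventually_sup, eventually_sup, eventually_pure]
  exact ⟨⟨hμ.tendsto_nhdsLT hI hleft, hμ.tendsto_nhdsGT hI hright⟩, mem_of_mem_nhds hright⟩

variable [NormedSpace ℝ F] {ψ : F → F} {c : ℝ} {U : Set F} {μ' : VectorMeasure ℝ F}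

theorem variation_restrict_comp (hμ : IsDerivMeasureOn v μ I)
    (hμ' : IsDerivMeasureOn (fun s => ψ (v s)) μ' I)
    (hψ : ∀ x ∈ U, ∀ y ∈ U, ψ y - ψ x = c • (y - x)) {a b : ℝ} (hI : Icc a b ⊆ I)
    (hU : MapsTo v (Icc a b) U) :
    μ'.variation.restrict (Ioc a b) = (‖c‖₊ • μ.variation).restrict (Ioc a b) := by
  have hrestrict : μ'.restrict (Ioc a b) = (c • μ).restrict (Ioc a b) := by
    refine restrict_Ioc_eq_of_forall_Ioc_eq fun x hx y hy hxy => ?_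
    rw [smul_apply, ← hμ x (hI hx) y (hI hy) hxy, ← hμ' x (hI hx) y (hI hy) hxy,
      hψ _ (hU hx) _ (hU hy)]
  rw [← VectorMeasure.variation_smul, ← VectorMeasure.variation_restrict measurableSet_Ioc,
    hrestrict, VectorMeasure.variation_restrict measurableSet_Ioc]

theorem variation_comp_eq [IsFiniteMeasure μ.variation] (hμ : IsDerivMeasureOn v μ I)
    (hμ' : IsDerivMeasureOn (fun s => ψ (v s)) μ' I) (hI : IsOpen I) {K : Set F}
    (hKU : K ⊆ interior U) (hψ : ∀ x ∈ U, ∀ y ∈ U, ψ y - ψ x = c • (y - x)) :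
    μ'.variation {t ∈ I | v.leftLim t ∈ K ∧ v.rightLim t ∈ K}
      = ‖c‖ₑ * μ.variation {t ∈ I | v.leftLim t ∈ K ∧ v.rightLim t ∈ K} := by
  change _ = (‖c‖₊ • μ.variation) _
  refine measure_eq_of_forall_exists_nhdsWithin_restrict_eq fun t ⟨htI, hleft, hright⟩ => ?_
  have hvU : ∀ᶠ s in 𝓝 t, v s ∈ U := hμ.eventually_mem (hI.mem_nhds htI)
    (mem_interior_iff_mem_nhds.1 (hKU hleft)) (mem_interior_iff_mem_nhds.1 (hKU hright))
  obtain ⟨r, hr, hball⟩ := Metric.nhds_basis_closedBall.eventually_iff.1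
    ((hI.eventually_mem htI).and hvU)
  rw [Real.closedBall_eq_Icc] at hball
  exact ⟨Ioc (t - r) (t + r), nhdsWithin_le_nhds (Ioc_mem_nhds (by linarith) (by linarith)),
    hμ.variation_restrict_comp hμ' hψ (fun s hs => (hball hs).1) fun s hs => (hball hs).2⟩

end IsDerivMeasureOn

end Derivative

theorem sub_eq_mul_sub_of_odd {R : Type*} [CommRing R] [LinearOrder R] [IsStrictOrderedRing R]
    {ψ : R → R} {c r s : R} (hodd : ∀ t, ψ (-t) = -ψ t) (hψ : ∀ t ∈ Icc 0 r, ψ t = c * t) :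
    ∀ x ∈ Icc (s - r) (s + r), ∀ y ∈ Icc (s - r) (s + r),
      ψ (y - s) - ψ (x - s) = c * (y - x) := by
  have hlin : ∀ t ∈ Icc (s - r) (s + r), ψ (t - s) = c * (t - s) := by
    rintro t ⟨hl, hr⟩
    rcases le_total s t with hst | hts
    · exact hψ _ ⟨by linarith, by linarith⟩
    · have hneg := hψ (-(t - s)) ⟨by linarith, by linarith⟩
      rw [hodd] at hneg
      linarith
  intro x hx y hy
  rw [hlin x hx, hlin y hy]
  ring

theorem statement15_general {α δ : ℝ} (hδ : 0 < δ) {ψ₀ : ℝ → ℝ} (hodd : ∀ t, ψ₀ (-t) = -ψ₀ t)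
    (hψ₀ : ∀ t ∈ Icc 0 (2 * δ), ψ₀ t = δ ^ (α - 1) * t) {sb : ℝ} {I : Set ℝ} (hI : IsOpen I)
    {v : ℝ → ℝ} {μ μ' : SignedMeasure ℝ} (hμ : IsDerivMeasureOn v μ I)
    (hμ' : IsDerivMeasureOn (fun s => ψ₀ (v s - sb)) μ' I) :
    μ.totalVariation
        {t ∈ I | v.leftLim t ∈ Icc (sb - δ) (sb + δ) ∧ v.rightLim t ∈ Icc (sb - δ) (sb + δ)}
      = ENNReal.ofReal (δ ^ (1 - α)) * μ'.totalVariation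
        {t ∈ I | v.leftLim t ∈ Icc (sb - δ) (sb + δ) ∧ v.rightLim t ∈ Icc (sb - δ) (sb + δ)} := by
  have hKU : Icc (sb - δ) (sb + δ) ⊆ interior (Icc (sb - 2 * δ) (sb + 2 * δ)) := by
    rw [interior_Icc]
    exact Icc_subset_Ioo (by linarith) (by linarith)
  have hslope : ENNReal.ofReal (δ ^ (1 - α)) * ‖δ ^ (α - 1)‖ₑ = 1 := by
    rw [Real.enorm_of_nonneg (by positivity), ← ENNReal.ofReal_mul (by positivity),
      ← Real.rpow_add hδ]
    simp
  have : IsFiniteMeasure μ.variation := by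
    rw [← SignedMeasure.totalVariation_eq_variation]
    infer_instance
  rw [SignedMeasure.totalVariation_eq_variation, SignedMeasure.totalVariation_eq_variation,
    IsDerivMeasureOn.variation_comp_eq (ψ := fun x => ψ₀ (x - sb)) hμ hμ' hI hKU
      (sub_eq_mul_sub_of_odd hodd hψ₀),
    ← mul_assoc, hslope, one_mul]

theorem statement15 (α δ : ℝ) (hα : α ∈ Set.Ioo (0:ℝ) 1) (hδ : δ ∈ Set.Ioo 0 (π/16))
    (ψ₀ : ℝ → ℝ) (hLip : ∃ L : ℝ≥0, LipschitzWith L ψ₀)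
    (hodd : ∀ t, ψ₀ (-t) = -ψ₀ t) (hper : ∀ t, ψ₀ (t + π) = ψ₀ t)
    (heven : ∀ t, ψ₀ (π/2 - t) = ψ₀ t)
    (hval1 : ∀ t ∈ Set.Icc 0 (2*δ), ψ₀ t = δ^(α-1) * t)
    (hval2 : ∀ t ∈ Set.Ioc (2*δ) (π/4), ψ₀ t = 2*δ^α)
    (sb : ℝ) (I : Set ℝ) (hIo : IsOpen I) (hIc : I.OrdConnected)
    (v : ℝ → ℝ) (hrc : ∀ t ∈ I, Filter.Tendsto v (𝓝[>] t) (𝓝 (v t)))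
    (μ μ' : MeasureTheory.SignedMeasure ℝ)
    (hμ : ∀ a ∈ I, ∀ b ∈ I, a ≤ b → v b - v a = μ (Set.Ioc a b))
    (hμsupp : μ.totalVariation Iᶜ = 0)
    (hμ' : ∀ a ∈ I, ∀ b ∈ I, a ≤ b → ψ₀ (v b - sb) - ψ₀ (v a - sb) = μ' (Set.Ioc a b))
    (hμ'supp : μ'.totalVariation Iᶜ = 0) :
    μ.totalVariation
        {t ∈ I | Function.leftLim v t ∈ Set.Icc (sb - δ) (sb + δ) ∧
          Function.rightLim v t ∈ Set.Icc (sb - δ) (sb + δ)}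
      ≤ ENNReal.ofReal (δ^(1-α)) *
        μ'.totalVariation
          {t ∈ I | Function.leftLim v t ∈ Set.Icc (sb - δ) (sb + δ) ∧
            Function.rightLim v t ∈ Set.Icc (sb - δ) (sb + δ)} := by
  exact (statement15_general hδ.1 hodd hval1 hIo hμ hμ').le

end Eikonal
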